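/- Let n, t, d ∈ ℕ with t ≥ 1 and d ≤ n − 1, and let Σ be an n×n positive semidefinite real matrix with eigenvalues λ₁ ≤ … ≤ λₙ. Then there exists a set S ⊆ [n] with |S| ≤ (7t)^{2t+1}·d such that for every t-sparse v ∈ ℝⁿ, √(λ_{d+1})·‖v_{[n]∖S}‖₂ ≤ 3·‖v‖_Σ. -/

import Mathlib

open Matrix MeasureTheory ProbabilityTheory
open scoped BigOperators ENNReal

noncomputable section

/-- `v` has at most `t` nonzero coordinates. -/
def SparseVec {k : ℕ} (t : ℕ) (v : Fin k → ℝ) : Prop := {i | v i ≠ 0}.ncard ≤ t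

/-- ⟨x,y⟩_Σ := xᵀ Σ y. -/
def innerSigma {k : ℕ} (A : Matrix (Fin k) (Fin k) ℝ) (x y : Fin k → ℝ) : ℝ := x ⬝ᵥ (A *ᵥ y)

/-- ‖x‖_Σ := √(xᵀ Σ x). -/
def normSigma {k : ℕ} (A : Matrix (Fin k) (Fin k) ℝ) (x : Fin k → ℝ) : ℝ :=
  Real.sqrt (innerSigma A x x)

/-- Euclidean norm on ℝ^k. -/
def l2norm {k : ℕ} (v : Fin k → ℝ) : ℝ := Real.sqrt (∑ i, v i ^ 2)

/-- ℓ1 norm on ℝ^k. -/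
def l1norm {k : ℕ} (v : Fin k → ℝ) : ℝ := ∑ i, |v i|

/-- restriction of `v` to coordinates outside `S` (zero on `S`). -/
def restrictOut {k : ℕ} (S : Finset (Fin k)) (v : Fin k → ℝ) : Fin k → ℝ :=
  fun i => if i ∈ S then 0 else v i

/-- The bottom eigenspace: `A` dominates the squared distance to it. -/
lemma exists_bottom (n d : ℕ) (hd : d + 1 ≤ n)
    (A : Matrix (Fin n) (Fin n) ℝ) (hA : A.PosSemidef)
    (lam : Fin n → ℝ) (hmono : Monotone lam)
    (g : Fin n ≃ Fin n) (hg : lam = hA.1.eigenvalues ∘ g) :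
    ∃ V : Submodule ℝ (EuclideanSpace ℝ (Fin n)), Module.finrank ℝ V ≤ d ∧
      ∀ v : Fin n → ℝ, ∃ w ∈ V,
        lam ⟨d, hd⟩ * ‖WithLp.toLp 2 v - w‖ ^ 2 ≤ innerSigma A v v := by
  set u := hA.1.eigenvectorBasis with hu
  refine ⟨Submodule.span ℝ (Set.range (fun k : Fin d => u (g (Fin.castLE (by omega) k)))), ?_, ?_⟩
  · have := finrank_range_le_card (R := ℝ) (fun k : Fin d => u (g (Fin.castLE (by omega) k)))
    simpa [Set.finrank] using this
  intro v
  set x : EuclideanSpace ℝ (Fin n) := WithLp.toLp 2 v with hx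
  refine ⟨∑ i, (if (g.symm i : ℕ) < d then inner ℝ (u i) x else 0) • u i, ?_, ?_⟩
  · refine Submodule.sum_mem _ fun i _ => ?_
    split_ifs with h
    · refine Submodule.smul_mem _ _ (Submodule.subset_span ⟨⟨g.symm i, h⟩, ?_⟩)
      simp [Fin.castLE]
    · simp
  · rw [← u.sum_sq_norm_inner_right, Finset.mul_sum]
    have key : innerSigma A v v = ∑ i, hA.1.eigenvalues i * inner ℝ (u i) x ^ 2 := by
      have h1 : innerSigma A v v = inner ℝ x (WithLp.toLp 2 (A *ᵥ v)) := by
        rw [EuclideanSpace.inner_eq_star_dotProduct]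
        simp [innerSigma, hx, dotProduct_comm]
      rw [h1, ← u.sum_inner_mul_inner]
      refine Finset.sum_congr rfl fun i _ => ?_
      have h2 : inner ℝ (u i) (WithLp.toLp 2 (A *ᵥ v)) = hA.1.eigenvalues i * inner ℝ (u i) x := by
        have h3 := hA.1.mulVec_eigenvectorBasis i
        have hT : Aᵀ = A := by simpa [Matrix.IsHermitian] using hA.1
        rw [EuclideanSpace.inner_eq_star_dotProduct, EuclideanSpace.inner_eq_star_dotProduct]
        simp only [star_trivial, hx]
        rw [dotProduct_comm, dotProduct_mulVec, ← mulVec_transpose, hT, h3, smul_dotProduct,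
          dotProduct_comm, smul_eq_mul]
      rw [h2, real_inner_comm]; ring
    rw [key]
    refine Finset.sum_le_sum fun i _ => ?_
    rw [inner_sub_right, u.orthonormal.inner_right_fintype]
    split_ifs with h
    · simpa using mul_nonneg (hA.eigenvalues_nonneg i) (sq_nonneg _)
    · have h5 : lam ⟨d, hd⟩ ≤ hA.1.eigenvalues i := by
        have : lam ⟨d, hd⟩ ≤ lam (g.symm i) := hmono (by rw [Fin.le_def]; simpa using h)
        simpa [hg] using this
      simp only [sub_zero, Real.norm_eq_abs, sq_abs]
      exact mul_le_mul_of_nonneg_right h5 (sq_nonneg _)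

abbrev stdVec {n : ℕ} (i : Fin n) : EuclideanSpace ℝ (Fin n) := EuclideanSpace.single i 1

lemma sum_proj_sq {n : ℕ} (U : Submodule ℝ (EuclideanSpace ℝ (Fin n))) :
    ∑ i, ‖U.starProjection (stdVec i)‖ ^ 2 = Module.finrank ℝ U := by
  set b := stdOrthonormalBasis ℝ U
  have h : ∀ i, ‖U.starProjection (stdVec i)‖ ^ 2 = ∑ k, ((b k : EuclideanSpace ℝ (Fin n)) i) ^ 2 := by
    intro i
    rw [Submodule.starProjection_apply, ← Submodule.coe_norm, ← b.sum_sq_norm_inner_right]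
    refine Finset.sum_congr rfl fun k _ => ?_
    rw [real_inner_comm, Submodule.inner_orthogonalProjectionOnto_eq_of_mem_right]
    simp [stdVec, EuclideanSpace.inner_single_left]
  simp_rw [h]
  rw [Finset.sum_comm]
  have h2 : ∀ k, ∑ i, ((b k : EuclideanSpace ℝ (Fin n)) i) ^ 2 = 1 := by
    intro k
    have := EuclideanSpace.norm_sq_eq (b k : EuclideanSpace ℝ (Fin n))
    rw [← Submodule.coe_norm, b.orthonormal.1 k] at this
    simpa using this.symm
  simp [h2]

def augm {n : ℕ} (V : Submodule ℝ (EuclideanSpace ℝ (Fin n))) (S : Finset (Fin n)) :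
    Submodule ℝ (EuclideanSpace ℝ (Fin n)) :=
  V ⊔ Submodule.span ℝ ((fun i => stdVec i) '' (S : Set (Fin n)))

def peel {n : ℕ} (V : Submodule ℝ (EuclideanSpace ℝ (Fin n))) (t : ℕ) : ℕ → Finset (Fin n)
  | 0 => ∅
  | j + 1 => Finset.univ.filter fun i =>
      1 ≤ 3 * (t : ℝ) * ‖(augm V (peel V t j)).starProjection (stdVec i)‖ ^ 2

lemma stdVec_mem {n : ℕ} (V : Submodule ℝ (EuclideanSpace ℝ (Fin n))) (S : Finset (Fin n))
    (i : Fin n) (hi : i ∈ S) : stdVec i ∈ augm V S :=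
  Submodule.mem_sup_right (Submodule.subset_span ⟨i, hi, rfl⟩)

lemma finrank_augm {n : ℕ} (V : Submodule ℝ (EuclideanSpace ℝ (Fin n))) (S : Finset (Fin n)) :
    Module.finrank ℝ (augm V S) ≤ Module.finrank ℝ V + S.card := by
  classical
  refine (Submodule.finrank_add_le_finrank_add_finrank _ _).trans ?_
  gcongr
  rw [← Finset.coe_image]
  exact (finrank_span_finset_le_card _).trans Finset.card_image_le

lemma peel_mono {n : ℕ} (V : Submodule ℝ (EuclideanSpace ℝ (Fin n))) (t : ℕ) (ht : 1 ≤ t) (j : ℕ) :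
    peel V t j ⊆ peel V t (j + 1) := by
  intro i hi
  have h := Submodule.starProjection_eq_self_iff.2 (stdVec_mem V _ i hi)
  have ht' : (1 : ℝ) ≤ t := by exact_mod_cast ht
  simp only [peel, Finset.mem_filter, Finset.mem_univ, true_and]
  rw [h]
  simp only [stdVec, EuclideanSpace.norm_single, norm_one]
  linarith

lemma peel_card_succ {n : ℕ} (V : Submodule ℝ (EuclideanSpace ℝ (Fin n))) (t j : ℕ) :
    (peel V t (j + 1)).card ≤ 3 * t * Module.finrank ℝ (augm V (peel V t j)) := by
  have h := sum_proj_sq (augm V (peel V t j))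
  have h1 : ((peel V t (j + 1)).card : ℝ) ≤
      ∑ i ∈ peel V t (j + 1),
        3 * (t : ℝ) * ‖(augm V (peel V t j)).starProjection (stdVec i)‖ ^ 2 := by
    rw [Finset.card_eq_sum_ones]
    push_cast
    refine Finset.sum_le_sum fun i hi => ?_
    simp only [peel, Finset.mem_filter, Finset.mem_univ, true_and] at hi
    exact hi
  have h2 : ((peel V t (j + 1)).card : ℝ) ≤
      3 * (t : ℝ) * Module.finrank ℝ (augm V (peel V t j)) := by
    refine h1.trans ?_
    rw [← h, Finset.mul_sum]
    exact Finset.sum_le_sum_of_subset_of_nonneg (Finset.subset_univ _)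
      fun i _ _ => by positivity
  exact_mod_cast h2

lemma peel_card {n : ℕ} (V : Submodule ℝ (EuclideanSpace ℝ (Fin n))) (t d : ℕ) (ht : 1 ≤ t)
    (hV : Module.finrank ℝ V ≤ d) (j : ℕ) : d + (peel V t j).card ≤ (4 * t) ^ j * d := by
  induction j with
  | zero => simp [peel]
  | succ j ih =>
    have h1 := peel_card_succ V t j
    have h2 := finrank_augm V (peel V t j)
    have h3 : Module.finrank ℝ (augm V (peel V t j)) ≤ (4 * t) ^ j * d := by omega
    have h4 : 1 ≤ (4 * t) ^ j := Nat.one_le_pow _ _ (by omega)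
    have h5 : d ≤ t * ((4 * t) ^ j * d) := by
      calc d = 1 * (1 * d) := by ring
        _ ≤ _ := by gcongr
    calc d + (peel V t (j + 1)).card ≤ t * ((4 * t) ^ j * d) + 3 * t * ((4 * t) ^ j * d) := by
          gcongr
          exact h1.trans (by gcongr)
      _ = _ := by ring

/-- The good step: no support in the layer `S' \ S`. -/
lemma good_step {n : ℕ} (V : Submodule ℝ (EuclideanSpace ℝ (Fin n))) (t j : ℕ) (ht : 1 ≤ t)
    (v : Fin n → ℝ) (hv : SparseVec t v)
    (hj : ∀ i, v i ≠ 0 → i ∈ peel V t (j + 1) → i ∈ peel V t j)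
    (w : EuclideanSpace ℝ (Fin n)) (hw : w ∈ V) :
    l2norm (restrictOut (peel V t j) v) ≤ 3 * ‖WithLp.toLp 2 v - w‖ := by
  classical
  set S := peel V t j with hS
  set U := augm V S with hU
  set B : Finset (Fin n) := Finset.univ.filter (fun i => v i ≠ 0 ∧ i ∉ S) with hB
  have hBt : (B.card : ℝ) ≤ t := by
    have : B.card ≤ t := by
      refine le_trans ?_ hv
      rw [← Set.ncard_coe_finset]
      exact Set.ncard_le_ncard (fun i hi => by simp [hB] at hi; exact hi.1) (Set.toFinite _)
    exact_mod_cast this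
  have ht' : (1 : ℝ) ≤ t := by exact_mod_cast ht
  set vB : EuclideanSpace ℝ (Fin n) := ∑ i ∈ B, v i • stdVec i with hvB
  have hvBi : ∀ i, vB i = restrictOut S v i := by
    intro i
    simp only [hvB, WithLp.ofLp_sum, Finset.sum_apply, WithLp.ofLp_smul, Pi.smul_apply, stdVec,
      EuclideanSpace.single_apply, smul_eq_mul, mul_ite, mul_one, mul_zero, Finset.sum_ite_eq, restrictOut, hB,
      Finset.mem_filter, Finset.mem_univ, true_and]
    by_cases h1 : i ∈ S <;> by_cases h2 : v i = 0 <;> simp [h1, h2]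
  have hnorm : l2norm (restrictOut S v) = ‖vB‖ := by
    rw [EuclideanSpace.norm_eq, l2norm]
    simp [hvBi]
  have hnsq : ‖vB‖ ^ 2 = ∑ i ∈ B, v i ^ 2 := by
    rw [EuclideanSpace.norm_sq_eq]
    rw [← Finset.sum_subset (Finset.subset_univ B)]
    · refine Finset.sum_congr rfl fun i hi => ?_
      rw [hvBi]
      simp [hB] at hi
      simp [restrictOut, hi.2]
    · intro i _ hi
      rw [hvBi]
      simp [hB] at hi
      by_cases h : v i = 0 <;> simp [restrictOut, h]
      exact hi h
  have hproj : ‖U.starProjection vB‖ ^ 2 ≤ 1 / 3 * ‖vB‖ ^ 2 := by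
    have h1 : ‖U.starProjection vB‖ ≤ ∑ i ∈ B, |v i| * ‖U.starProjection (stdVec i)‖ := by
      rw [hvB, map_sum]
      refine (norm_sum_le _ _).trans (Finset.sum_le_sum fun i _ => ?_)
      rw [map_smul, norm_smul, Real.norm_eq_abs]
    have h2 : ∑ i ∈ B, ‖U.starProjection (stdVec i)‖ ^ 2 ≤ 1 / 3 := by
      have h3 : ∀ i ∈ B, ‖U.starProjection (stdVec i)‖ ^ 2 ≤ 1 / (3 * t) := by
        intro i hi
        simp only [hB, Finset.mem_filter, Finset.mem_univ, true_and] at hi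
        have h4 : i ∉ peel V t (j + 1) := fun h => hi.2 (hj i hi.1 h)
        simp only [peel, Finset.mem_filter, Finset.mem_univ, true_and, not_le] at h4
        rw [le_div_iff₀ (by positivity)]
        rw [mul_comm]
        exact h4.le
      refine (Finset.sum_le_card_nsmul _ _ _ h3).trans ?_
      rw [nsmul_eq_mul]
      calc (B.card : ℝ) * (1 / (3 * t)) ≤ t * (1 / (3 * t)) := by gcongr
        _ = 1 / 3 := by field_simp
    calc ‖U.starProjection vB‖ ^ 2 ≤ (∑ i ∈ B, |v i| * ‖U.starProjection (stdVec i)‖) ^ 2 := by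
          gcongr
      _ ≤ (∑ i ∈ B, |v i| ^ 2) * ∑ i ∈ B, ‖U.starProjection (stdVec i)‖ ^ 2 :=
          Finset.sum_mul_sq_le_sq_mul_sq _ _ _
      _ ≤ ‖vB‖ ^ 2 * (1 / 3) := by
          simp only [sq_abs]
          rw [← hnsq]
          gcongr
      _ = _ := by ring
  have hu : w - (WithLp.toLp 2 v - vB) ∈ U := by
    refine Submodule.sub_mem _ (Submodule.mem_sup_left hw) ?_
    have : (WithLp.toLp 2 v - vB) = ∑ i ∈ S, v i • stdVec i := by
      ext i
      rw [WithLp.ofLp_sub, Pi.sub_apply, hvBi]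
      simp only [WithLp.ofLp_sum, Finset.sum_apply, WithLp.ofLp_smul, Pi.smul_apply, stdVec,
        EuclideanSpace.single_apply, smul_eq_mul, mul_ite, mul_one, mul_zero, Finset.sum_ite_eq, restrictOut]
      by_cases h1 : i ∈ S <;> simp [h1]
    rw [this]
    exact Submodule.sum_mem _ fun i hi => Submodule.smul_mem _ _ (stdVec_mem V S i hi)
  have hmin : ‖vB - U.starProjection vB‖ ≤ ‖WithLp.toLp 2 v - w‖ := by
    rw [Submodule.starProjection_minimal]
    have := ciInf_le (f := fun x : U => ‖vB - x‖) ⟨0, by rintro _ ⟨y, rfl⟩; positivity⟩ ⟨_, hu⟩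
    refine this.trans (le_of_eq ?_)
    congr 1
    simp only
    abel
  have htri : ‖vB‖ - ‖U.starProjection vB‖ ≤ ‖vB - U.starProjection vB‖ := norm_sub_norm_le _ _
  have h23 : ‖U.starProjection vB‖ ≤ 2 / 3 * ‖vB‖ := by
    refine le_of_sq_le_sq ?_ (by positivity)
    nlinarith [sq_nonneg ‖vB‖]
  rw [hnorm]
  linarith

lemma l2norm_anti {n : ℕ} {S T : Finset (Fin n)} (h : S ⊆ T) (v : Fin n → ℝ) :
    l2norm (restrictOut T v) ≤ l2norm (restrictOut S v) := by
  refine Real.sqrt_le_sqrt (Finset.sum_le_sum fun i _ => ?_)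
  simp only [restrictOut]
  by_cases h1 : i ∈ S
  · simp [h1, h h1]
  · by_cases h2 : i ∈ T <;> simp [h1, h2, sq_nonneg]

lemma peel_main {n : ℕ} (V : Submodule ℝ (EuclideanSpace ℝ (Fin n))) (t : ℕ) (ht : 1 ≤ t)
    (v : Fin n → ℝ) (hv : SparseVec t v)
    (w : EuclideanSpace ℝ (Fin n)) (hw : w ∈ V) :
    l2norm (restrictOut (peel V t t) v) ≤ 3 * ‖WithLp.toLp 2 v - w‖ := by
  classical
  have hmono : Monotone (peel V t) := monotone_nat_of_le_succ fun j => peel_mono V t ht j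
  by_cases hex : ∃ j < t, ∀ i, v i ≠ 0 → i ∈ peel V t (j + 1) → i ∈ peel V t j
  · obtain ⟨j, hjt, hj⟩ := hex
    exact (l2norm_anti (hmono hjt.le) v).trans (good_step V t j ht v hv hj w hw)
  · push Not at hex
    set T : Finset (Fin n) := Finset.univ.filter (fun i => v i ≠ 0) with hT
    have hTt : T.card ≤ t := by
      refine le_trans (le_of_eq ?_) hv
      rw [← Set.ncard_coe_finset]
      congr 1
      ext i; simp [hT]
    have hcard : ∀ j ≤ t, j ≤ (T ∩ peel V t j).card := by
      intro j
      induction j with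
      | zero => simp
      | succ j ih =>
        intro hj
        have h1 := ih (by omega)
        obtain ⟨i, hi, hi1, hi2⟩ := hex j (by omega)
        have : (T ∩ peel V t j).card < (T ∩ peel V t (j + 1)).card := by
          refine Finset.card_lt_card ⟨Finset.inter_subset_inter_left (peel_mono V t ht j), ?_⟩
          intro hsub
          have := hsub (Finset.mem_inter.2 ⟨by simpa [hT] using hi, hi1⟩)
          exact hi2 (Finset.mem_inter.1 this).2
        omega
    have hsub : T ∩ peel V t t = T :=
      Finset.eq_of_subset_of_card_le Finset.inter_subset_left (hTt.trans (hcard t le_rfl))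
    have hz : restrictOut (peel V t t) v = 0 := by
      ext i
      simp only [restrictOut, Pi.zero_apply]
      split_ifs with h
      · rfl
      · by_contra hne
        have : i ∈ T := by simpa [hT] using hne
        rw [← hsub] at this
        exact h (Finset.mem_inter.1 this).2
    rw [hz]
    simp only [l2norm, Pi.zero_apply]
    simp

/-- guarantee of iterative peeling. `lam` enumerates the eigenvalues of Σ
in nondecreasing order (so `lam ⟨d, _⟩` is `λ_{d+1}` in 1-indexed notation). -/
theorem stmt5 (n t d : ℕ) (ht : 1 ≤ t) (hd : d + 1 ≤ n)
    (A : Matrix (Fin n) (Fin n) ℝ) (hA : A.PosSemidef)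
    (lam : Fin n → ℝ) (hmono : Monotone lam)
    (g : Fin n ≃ Fin n) (hg : lam = hA.1.eigenvalues ∘ g) :
    ∃ S : Finset (Fin n), S.card ≤ (7 * t) ^ (2 * t + 1) * d ∧
      ∀ v : Fin n → ℝ, SparseVec t v →
        Real.sqrt (lam ⟨d, hd⟩) * l2norm (restrictOut S v) ≤ 3 * normSigma A v := by
  obtain ⟨V, hV, hVw⟩ := exists_bottom n d hd A hA lam hmono g hg
  refine ⟨peel V t t, ?_, ?_⟩
  · have h := peel_card V t d ht hV t
    refine (Nat.le_add_left _ d).trans (h.trans ?_)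
    gcongr ?_ * d
    calc (4 * t) ^ t ≤ (7 * t) ^ t := by gcongr; norm_num
      _ ≤ (7 * t) ^ (2 * t + 1) := Nat.pow_le_pow_right (by omega) (by omega)
  · intro v hv
    obtain ⟨w, hw, hle⟩ := hVw v
    have h1 := peel_main V t ht v hv w hw
    have h0 : 0 ≤ lam ⟨d, hd⟩ := by rw [hg]; exact hA.eigenvalues_nonneg _
    have h2 : Real.sqrt (lam ⟨d, hd⟩) * ‖WithLp.toLp 2 v - w‖ ≤ normSigma A v := by
      rw [normSigma]
      refine Real.le_sqrt_of_sq_le ?_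
      rw [mul_pow, Real.sq_sqrt h0]
      exact hle
    calc _ ≤ Real.sqrt (lam ⟨d, hd⟩) * (3 * ‖WithLp.toLp 2 v - w‖) := by gcongr
      _ = 3 * (Real.sqrt (lam ⟨d, hd⟩) * ‖WithLp.toLp 2 v - w‖) := by ring
      _ ≤ _ := by gcongr
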